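/- Suppose Assumption A1 holds and let p* ∈ Δ_n be an equilibrium of the perception dynamics with reflected appraisals (system (11)). Then for any σ ∈ [1/2, 1), if p*_i > σ for some individual i, then ∑_{j=1}^n C_{ji} a_j/(1 − a_j) > a_i/(1 − a_i) + (nσ − 1)/(nσ(1 − σ)). -/

import Mathlib

/-!
Write `b j = a j / (1 - a j)`. Dividing the `i`-th equilibrium equation by `1 - a i` gives
`p i + b i * p i (1 - p i) = ∑ j, C j i * b j * p j (1 - p j) + 1 / n`. When `p i > 1/2`, every
other `p j` satisfies `p j ≤ 1 - p i`, hence `p j (1 - p j) ≤ p i (1 - p i)`, and the sum is at most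
`p i (1 - p i) * ∑ j, C j i * b j`. This excludes `p i = 1`, and dividing by `p i (1 - p i)` gives
the claim with `p i` in place of `σ`. It remains to use that `x ↦ (n x - 1) / (n x (1 - x))` is
strictly increasing on `[1/2, 1)`.
-/

open Matrix Finset

/-- `W(x) = diag(x) + (I - diag(x)) C`. -/
noncomputable def Wmat (n : ℕ) (C : Matrix (Fin n) (Fin n) ℝ) (x : Fin n → ℝ) :
    Matrix (Fin n) (Fin n) ℝ :=
  Matrix.diagonal x + (1 - Matrix.diagonal x) * C

/-- The map of system (11): `p ↦ (I - A) W(p)ᵀ A (I - A)⁻¹ p + (I - A) 𝟙 / n`. -/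
noncomputable def percMap (n : ℕ) (C : Matrix (Fin n) (Fin n) ℝ) (a : Fin n → ℝ)
    (p : Fin n → ℝ) : Fin n → ℝ :=
  ((1 - Matrix.diagonal a) * (Wmat n C p)ᵀ * Matrix.diagonal a *
      (1 - Matrix.diagonal a)⁻¹) *ᵥ p
    + (1 / (n : ℝ)) • ((1 - Matrix.diagonal a) *ᵥ (fun _ => (1 : ℝ)))

/-- The `n`-simplex `Δ_n`. -/
def simplex (n : ℕ) : Set (Fin n → ℝ) := {x | (∀ i, 0 ≤ x i) ∧ ∑ i, x i = 1}

/-- The box `Γ_n(y, z) = {x : y ≤ x ≤ z}`. -/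
def box (n : ℕ) (y z : Fin n → ℝ) : Set (Fin n → ℝ) := {x | ∀ i, y i ≤ x i ∧ x i ≤ z i}

/-- The componentwise form of the map. -/
lemma percMap_apply (n : ℕ) (C : Matrix (Fin n) (Fin n) ℝ) (a : Fin n → ℝ)
    (ha1 : ∀ i, a i < 1) (hCdiag : ∀ i, C i i = 0) (p : Fin n → ℝ) (i : Fin n) :
    percMap n C a p i = a i * p i ^ 2 +
      (1 - a i) * ∑ j, C j i * (a j / (1 - a j)) * (p j * (1 - p j)) + (1 - a i) / n := by
  have hne : ∀ j, 1 - a j ≠ 0 := fun j => (sub_pos.2 (ha1 j)).ne'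
  have hd : ∀ x : Fin n → ℝ, (1 : Matrix (Fin n) (Fin n) ℝ) - diagonal x =
      diagonal (fun j => 1 - x j) := by
    intro x
    rw [← diagonal_one, diagonal_sub]
  have hinv : (diagonal (fun j => 1 - a j) : Matrix (Fin n) (Fin n) ℝ)⁻¹ =
      diagonal (fun j => (1 - a j)⁻¹) := by
    apply Matrix.inv_eq_right_inv
    rw [diagonal_mul_diagonal, ← diagonal_one]
    congr 1
    funext j
    exact mul_inv_cancel₀ (hne j)
  have hterm : ∀ j, (1 - a i) * (diagonal p j i + (1 - p j) * C j i) * a j * (1 - a j)⁻¹ * p j =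
      (if j = i then a i * p i ^ 2 else 0) +
        (1 - a i) * (C j i * (a j / (1 - a j)) * (p j * (1 - p j))) := by
    intro j
    by_cases h : j = i
    · subst h
      have := hne j
      simp only [diagonal_apply_eq, hCdiag, if_true]
      field_simp
    · rw [diagonal_apply_ne _ h, if_neg h, div_eq_mul_inv]
      ring
  simp only [percMap, Wmat, hd, hinv, Pi.add_apply, Pi.smul_apply, mulVec_diagonal, smul_eq_mul]
  simp only [mulVec, dotProduct, mul_diagonal, diagonal_mul, transpose_apply, Matrix.add_apply]
  rw [Finset.sum_congr rfl fun j _ => hterm j, Finset.sum_add_distrib, Finset.mul_sum]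
  simp
  ring

/-- necessary condition for the existence of a dominant individual at an
equilibrium `p* ∈ Δ_n` of system (11). -/
theorem dominant_individual_necessary_condition
    (n : ℕ) (hn : 2 ≤ n)
    (C : Matrix (Fin n) (Fin n) ℝ)
    (hC0 : ∀ i j, 0 ≤ C i j) (hCrow : ∀ i, ∑ j, C i j = 1) (hCdiag : ∀ i, C i i = 0)
    (a : Fin n → ℝ) (ha0 : ∀ i, 0 ≤ a i) (ha1 : ∀ i, a i < 1) (hane : a ≠ 0)
    (pstar : Fin n → ℝ) (hps : pstar ∈ simplex n) (hpe : percMap n C a pstar = pstar)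
    (σ : ℝ) (hσ : σ ∈ Set.Ico (1/2 : ℝ) 1)
    (i : Fin n) (hdom : pstar i > σ) :
    ∑ j, C j i * (a j / (1 - a j)) >
      a i / (1 - a i) + ((n : ℝ) * σ - 1) / ((n : ℝ) * σ * (1 - σ)) := by
  obtain ⟨hp0, hp1⟩ := hps
  obtain ⟨hσ1, hσ2⟩ := hσ
  have heq := percMap_apply n C a ha1 hCdiag pstar i
  rw [hpe] at heq
  set p := pstar i with hp
  set T := ∑ j, C j i * (a j / (1 - a j)) with hT
  have hn2 : (2 : ℝ) ≤ n := by exact_mod_cast hn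
  have hai : 0 < 1 - a i := sub_pos.2 (ha1 i)
  have hS : ∑ j, C j i * (a j / (1 - a j)) * (pstar j * (1 - pstar j)) ≤ T * (p * (1 - p)) := by
    rw [hT, Finset.sum_mul]
    refine Finset.sum_le_sum fun j _ => mul_le_mul_of_nonneg_left ?_
      (mul_nonneg (hC0 j i) (div_nonneg (ha0 j) (sub_pos.2 (ha1 j)).le))
    by_cases h : j = i
    · rw [h]
    · have hle : p + pstar j ≤ 1 := by
        rw [← hp1, ← Finset.sum_pair (Ne.symm h)]
        exact Finset.sum_le_sum_of_subset_of_nonneg (Finset.subset_univ _) fun k _ _ => hp0 k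
      -- the difference of the two sides is `(p - pstar j) * (1 - p - pstar j)`
      nlinarith [mul_nonneg (show 0 ≤ p - pstar j by linarith) (sub_nonneg.2 hle)]
  have hmain : p + a i / (1 - a i) * (p * (1 - p)) ≤ T * (p * (1 - p)) + 1 / n := by
    have h2 : p + a i / (1 - a i) * (p * (1 - p)) =
        ∑ j, C j i * (a j / (1 - a j)) * (pstar j * (1 - pstar j)) + 1 / n := by
      have hai' := hai.ne'
      have hn' : (n : ℝ) ≠ 0 := by positivity
      generalize ∑ j, C j i * (a j / (1 - a j)) * (pstar j * (1 - pstar j)) = S at heq ⊢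
      field_simp at heq ⊢
      linear_combination heq
    linarith
  have hn1 : 1 / (n : ℝ) ≤ 1 / 2 := by gcongr
  have hple : p ≤ 1 := hp1 ▸ Finset.single_le_sum (fun k _ => hp0 k) (Finset.mem_univ i)
  have hplt : p < 1 := by
    refine lt_of_le_of_ne hple fun h => ?_
    rw [h] at hmain
    norm_num at hmain hn1
    linarith
  have hppos : 0 < p := by linarith
  have hq : 0 < p * (1 - p) := mul_pos hppos (sub_pos.2 hplt)
  have hbound : a i / (1 - a i) + ((n : ℝ) * p - 1) / (n * p * (1 - p)) ≤ T := by
    have h3 : ((n : ℝ) * p - 1) / (n * p * (1 - p)) = (p - 1 / n) / (p * (1 - p)) := by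
      have : 1 - p ≠ 0 := (sub_pos.2 hplt).ne'
      field_simp
    rw [h3, ← le_sub_iff_add_le', div_le_iff₀ hq]
    linarith
  have hmono : ((n : ℝ) * σ - 1) / (n * σ * (1 - σ)) < ((n : ℝ) * p - 1) / (n * p * (1 - p)) := by
    have hσ0 : 0 < σ := by linarith
    have hs : 0 < 1 - σ := sub_pos.2 hσ2
    have hr : 0 < 1 - p := sub_pos.2 hplt
    have hnpos : (0 : ℝ) < n := by linarith
    rw [div_lt_div_iff₀ (by positivity) (by positivity)]
    have hnσ : 1 ≤ (n : ℝ) * σ := by nlinarith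
    have hfac : 0 < (p - σ) * ((n * σ - 1) * p + (1 - σ)) :=
      mul_pos (by linarith) (by nlinarith [mul_nonneg (sub_nonneg.2 hnσ) hppos.le])
    -- `n` times this product is the difference of the two sides
    nlinarith [mul_pos hnpos hfac]
  linarith
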